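/- Let A be an affine Poisson algebra and let M be a simple Poisson A-module that is finite-dimensional as a ℂ-vector space. Then ann_A(M) is a maximal ideal of A. -/

import Mathlib

/-- A Poisson bracket on a commutative ℂ-algebra `A`: a ℂ-bilinear product making `A`
a Lie algebra and such that each Hamiltonian `ham a = br a ·` is a ℂ-derivation of `A`. -/
structure PoissonStruct (A : Type*) [CommRing A] [Algebra ℂ A] where
  br : A → A → A
  add_left : ∀ a b c : A, br (a + b) c = br a c + br b c
  smul_left : ∀ (r : ℂ) (a b : A), br (r • a) b = r • br a b
  add_right : ∀ a b c : A, br a (b + c) = br a b + br a c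
  smul_right : ∀ (r : ℂ) (a b : A), br a (r • b) = r • br a b
  antisymm : ∀ a b : A, br a b = - br b a
  jacobi : ∀ a b c : A, br a (br b c) = br (br a b) c + br b (br a c)
  leibniz : ∀ a b c : A, br a (b * c) = br a b * c + b * br a c

/-- An ideal `I` of a Poisson algebra is a Poisson ideal if `{a, i} ∈ I`
for all `a ∈ A` and `i ∈ I`. -/
def PoissonStruct.IsPoissonIdeal {A : Type*} [CommRing A] [Algebra ℂ A]
    (P : PoissonStruct A) (I : Ideal A) : Prop :=
  ∀ a : A, ∀ i ∈ I, P.br a i ∈ I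

/-- A Poisson module structure on an `A`-module `M`, in the sense of Farkas and Oh. -/
structure PoissonModuleStruct {A : Type*} [CommRing A] [Algebra ℂ A]
    (P : PoissonStruct A) (M : Type*) [AddCommGroup M] [Module ℂ M] [Module A M]
    [IsScalarTower ℂ A M] where
  pbr : A → M → M
  add_left : ∀ (a b : A) (m : M), pbr (a + b) m = pbr a m + pbr b m
  smul_left : ∀ (r : ℂ) (a : A) (m : M), pbr (r • a) m = r • pbr a m
  add_right : ∀ (a : A) (m n : M), pbr a (m + n) = pbr a m + pbr a n
  smul_right : ∀ (r : ℂ) (a : A) (m : M), pbr a (r • m) = r • pbr a m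
  lie_compat : ∀ (a b : A) (m : M), pbr (P.br a b) m = pbr a (pbr b m) - pbr b (pbr a m)
  deriv_act : ∀ (a b : A) (m : M), pbr a (b • m) = P.br a b • m + b • pbr a m
  mul_act : ∀ (a b : A) (m : M), pbr (a * b) m = a • pbr b m + b • pbr a m

namespace PoissonModuleStruct

variable {A : Type*} [CommRing A] [Algebra ℂ A] {P : PoissonStruct A}
  {M : Type*} [AddCommGroup M] [Module ℂ M] [Module A M] [IsScalarTower ℂ A M]

/-- A Poisson submodule of a Poisson module. -/
def IsPoissonSubmodule (Q : PoissonModuleStruct P M) (N : Submodule A M) : Prop :=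
  ∀ a : A, ∀ n ∈ N, Q.pbr a n ∈ N

/-- A simple Poisson module: nonzero, and its only Poisson submodules are `⊥` and `⊤`. -/
def IsSimple (Q : PoissonModuleStruct P M) : Prop :=
  (∃ m : M, m ≠ 0) ∧ ∀ N : Submodule A M, Q.IsPoissonSubmodule N → N = ⊥ ∨ N = ⊤

end PoissonModuleStruct

namespace PoissonModuleStruct

variable {A : Type*} [CommRing A] [Algebra ℂ A] {P : PoissonStruct A}
  {M : Type*} [AddCommGroup M] [Module ℂ M] [Module A M] [IsScalarTower ℂ A M]

/-- Powers of an element satisfy the Leibniz rule up to a multiple of the lower power. -/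
theorem exists_pbr_pow_smul (Q : PoissonModuleStruct P M) (b x : A) (n : ℕ) (m : M) :
    ∃ c : A, Q.pbr b (x ^ (n + 1) • m) = (c * x ^ n) • m + x ^ (n + 1) • Q.pbr b m := by
  induction n with
  | zero => exact ⟨P.br b x, by simp [Q.deriv_act]⟩
  | succ n ih =>
    obtain ⟨c, hc⟩ := ih
    refine ⟨P.br b x + c, ?_⟩
    rw [pow_succ' x (n + 1), mul_smul, Q.deriv_act, hc]
    module

theorem pbr_zero (Q : PoissonModuleStruct P M) (b : A) : Q.pbr b 0 = 0 := by
  simpa using Q.smul_right 0 b 0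

/-- The submodule of elements killed by some power of `x`. -/
def powerTorsion (M : Type*) [AddCommGroup M] [Module A M] (x : A) : Submodule A M where
  carrier := {m | ∃ n : ℕ, x ^ n • m = 0}
  zero_mem' := ⟨0, smul_zero _⟩
  add_mem' := by
    rintro m m' ⟨n, hn⟩ ⟨k, hk⟩
    refine ⟨n + k, ?_⟩
    rw [smul_add, pow_add, mul_smul _ _ m', hk, mul_comm, mul_smul, hn]
    simp
  smul_mem' := by
    rintro c m ⟨n, hn⟩
    exact ⟨n, by rw [smul_comm, hn, smul_zero]⟩

theorem isPoissonSubmodule_powerTorsion (Q : PoissonModuleStruct P M) (x : A) :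
    Q.IsPoissonSubmodule (powerTorsion M x) := by
  rintro b m ⟨n, hn⟩
  obtain ⟨c, hc⟩ := Q.exists_pbr_pow_smul b x n m
  refine ⟨n + 1, ?_⟩
  rw [mul_smul, hn, smul_zero, zero_add, pow_succ', mul_smul, hn, smul_zero, Q.pbr_zero] at hc
  rw [pow_succ', ← hc]

theorem isNilpotent_lsmul_iff {x : A} :
    IsNilpotent (Algebra.lsmul ℂ ℂ M x) ↔ x ∈ (Module.annihilator A M).radical := by
  simp only [IsNilpotent, Ideal.mem_radical_iff, Module.mem_annihilator, ← map_pow,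
    LinearMap.ext_iff, Algebra.lsmul_coe, LinearMap.zero_apply]

/-- Every element of `A` acts on a simple finite-dimensional Poisson module as a scalar plus a
nilpotent operator. -/
theorem IsSimple.exists_sub_algebraMap_mem_radical [FiniteDimensional ℂ M]
    {Q : PoissonModuleStruct P M} (hQ : Q.IsSimple) (a : A) :
    ∃ r : ℂ, a - algebraMap ℂ A r ∈ (Module.annihilator A M).radical := by
  obtain ⟨m₀, hm₀⟩ := hQ.1
  have : Nontrivial M := ⟨m₀, 0, hm₀⟩
  obtain ⟨r, hr⟩ := Module.End.exists_eigenvalue (Algebra.lsmul ℂ ℂ M a)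
  obtain ⟨v, hv⟩ := hr.exists_hasEigenvector
  refine ⟨r, isNilpotent_lsmul_iff.1 (Module.End.isNilpotent_iff_of_finite.2 fun m => ?_)⟩
  set x := a - algebraMap ℂ A r
  have hvx : v ∈ powerTorsion M x := by
    refine ⟨1, ?_⟩
    have hav : a • v = r • v := hv.apply_eq_smul
    rw [pow_one, sub_smul, hav, algebraMap_smul, sub_self]
  have hm : m ∈ powerTorsion M x := by
    rcases hQ.2 _ (Q.isPoissonSubmodule_powerTorsion x) with h | h
    · rw [h, Submodule.mem_bot] at hvx
      exact absurd hvx hv.2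
    · simp [h]
  obtain ⟨n, hn⟩ := hm
  exact ⟨n, by rwa [← map_pow, Algebra.lsmul_coe]⟩

/-- The operator `{b, -}` on a Poisson module. -/
def pbrEnd (Q : PoissonModuleStruct P M) (b : A) : Module.End ℂ M where
  toFun := Q.pbr b
  map_add' := Q.add_right b
  map_smul' r m := Q.smul_right r b m

theorem trace_lsmul_br (Q : PoissonModuleStruct P M) (b x : A) :
    LinearMap.trace ℂ M (Algebra.lsmul ℂ ℂ M (P.br b x)) = 0 := by
  have h : Algebra.lsmul ℂ ℂ M (P.br b x) =
      Q.pbrEnd b * Algebra.lsmul ℂ ℂ M x - Algebra.lsmul ℂ ℂ M x * Q.pbrEnd b := by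
    ext m
    simp [pbrEnd, Q.deriv_act]
  rw [h, map_sub, LinearMap.trace_mul_comm, sub_self]

/-- On a simple finite-dimensional Poisson module every bracket acts nilpotently: it is a scalar
plus a nilpotent operator, and has trace zero. -/
theorem IsSimple.br_mem_radical [FiniteDimensional ℂ M]
    {Q : PoissonModuleStruct P M} (hQ : Q.IsSimple) (b x : A) :
    P.br b x ∈ (Module.annihilator A M).radical := by
  obtain ⟨m₀, hm₀⟩ := hQ.1
  have : Nontrivial M := ⟨m₀, 0, hm₀⟩
  obtain ⟨r, hr⟩ := hQ.exists_sub_algebraMap_mem_radical (P.br b x)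
  have htr := (LinearMap.isNilpotent_trace_of_isNilpotent
    (isNilpotent_lsmul_iff.2 hr)).eq_zero
  rw [map_sub, map_sub, Q.trace_lsmul_br, AlgHom.commutes, Algebra.algebraMap_eq_smul_one,
    map_smul, LinearMap.trace_one, zero_sub, neg_eq_zero, smul_eq_mul, mul_eq_zero] at htr
  have hr0 : r = 0 := htr.resolve_right (by exact_mod_cast Module.finrank_pos.ne')
  simpa [hr0] using hr

/-- The annihilator of a simple finite-dimensional Poisson module is a radical ideal. -/
theorem IsSimple.isRadical_annihilator [IsNoetherianRing A] [FiniteDimensional ℂ M]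
    {Q : PoissonModuleStruct P M} (hQ : Q.IsSimple) :
    (Module.annihilator A M).IsRadical := by
  set I := (Module.annihilator A M).radical
  have hP : Q.IsPoissonSubmodule (I • (⊤ : Submodule A M)) := by
    intro b n hn
    refine Submodule.smul_induction_on hn (fun x hx m _ => ?_) fun m m' hm hm' => ?_
    · rw [Q.deriv_act]
      exact add_mem (Submodule.smul_mem_smul (hQ.br_mem_radical b x) trivial)
        (Submodule.smul_mem_smul hx trivial)
    · rw [Q.add_right]
      exact add_mem hm hm'
  rcases hQ.2 _ hP with h | h
  · intro x hx
    rw [Module.mem_annihilator]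
    intro m
    have : x • m ∈ I • (⊤ : Submodule A M) := Submodule.smul_mem_smul hx trivial
    rwa [h, Submodule.mem_bot] at this
  · obtain ⟨n, hn⟩ := (Module.annihilator A M).exists_radical_pow_le_of_fg
      (IsNoetherian.noetherian _)
    have htop : ∀ k : ℕ, I ^ k • (⊤ : Submodule A M) = ⊤ := by
      intro k
      induction k with
      | zero => simp
      | succ k ih => rw [pow_succ, Submodule.mul_smul, h, ih]
    have hbot : (⊤ : Submodule A M) ≤ ⊥ := by
      rw [← htop n, Submodule.smul_le]
      exact fun x hx m _ => Module.mem_annihilator.1 (hn hx) m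
    obtain ⟨m₀, hm₀⟩ := hQ.1
    exact absurd (hbot (Submodule.mem_top (x := m₀))) hm₀

end PoissonModuleStruct

/-- Let `A` be an affine Poisson algebra and `M` a simple Poisson
`A`-module that is finite-dimensional over ℂ. Then `ann_A(M)` is a maximal ideal of `A`. -/
theorem stmt2 {A : Type*} [CommRing A] [Algebra ℂ A] [Algebra.FiniteType ℂ A]
    (P : PoissonStruct A)
    {M : Type*} [AddCommGroup M] [Module ℂ M] [Module A M] [IsScalarTower ℂ A M]
    [FiniteDimensional ℂ M]
    (Q : PoissonModuleStruct P M) (hsimple : Q.IsSimple) :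
    (Module.annihilator A M).IsMaximal := by
  have : IsNoetherianRing A := Algebra.FiniteType.isNoetherianRing ℂ A
  rw [Ideal.isMaximal_iff]
  constructor
  · intro h
    obtain ⟨m, hm⟩ := hsimple.1
    exact hm (by simpa using Module.mem_annihilator.1 h m)
  · intro K x hK hx hxK
    obtain ⟨r, hr⟩ := hsimple.exists_sub_algebraMap_mem_radical x
    rw [hsimple.isRadical_annihilator.radical] at hr
    have hr0 : r ≠ 0 := by
      rintro rfl
      exact hx (by simpa using hr)
    have hmem : algebraMap ℂ A r ∈ K := by simpa using sub_mem hxK (hK hr)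
    simpa [← map_mul, hr0] using K.mul_mem_left (algebraMap ℂ A r⁻¹) hmem
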